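/- arXiv:2510.10838 — 3 statements merged into one kernel-verified Lean document; each statement's English description precedes it below -/
import Mathlib

section
/- Semisimplicity of orientation-preserving automorphisms of median graphs: let 𝒢 be a median graph endowed with a cubical orientation o, let f be an automorphism of 𝒢 preserving o, and let x be a vertex realizing the translation length of f, i.e., dist(x, f(x)) ≤ dist(y, f(y)) for every vertex y. Then dist(x, fⁿ(x)) = n · dist(x, f(x)) for every n ∈ ℕ; in particular f is either elliptic (it fixes a vertex) or loxodromic. -/
/-- `m` is a median of `x`, `y`, `z` in the graph `G`. -/
def IsMedianOf {V : Type*} (G : SimpleGraph V) (m x y z : V) : Prop :=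
  G.dist x y = G.dist x m + G.dist m y ∧
  G.dist y z = G.dist y m + G.dist m z ∧
  G.dist x z = G.dist x m + G.dist m z

/-- A median graph: connected, and every triple of vertices has a unique median. -/
def MedianGraph {V : Type*} (G : SimpleGraph V) : Prop :=
  G.Connected ∧ ∀ x y z : V, ∃! m : V, IsMedianOf G m x y z

/-- A cubical orientation: to every ordered pair of adjacent vertices it assigns a
Boolean, with opposite values on the two orderings, and equal values on
square-opposite edges (with consistent orderings). -/
def CubicalOrientation {V : Type*} (G : SimpleGraph V) (o : V → V → Bool) : Prop :=
  (∀ u v : V, G.Adj u v → o u v ≠ o v u) ∧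
  (∀ a b c d : V, a ≠ b → a ≠ c → a ≠ d → b ≠ c → b ≠ d → c ≠ d →
    G.Adj a b → G.Adj c d → G.Adj a c → G.Adj b d → o a b = o c d)

/-- A first step on a geodesic. -/
theorem exists_step {V : Type*} {G : SimpleGraph V} (hc : G.Connected) {a b : V} {k : ℕ}
    (h : G.dist a b = k + 1) : ∃ w, G.Adj a w ∧ G.dist w b = k := by
  obtain ⟨p, hp⟩ := hc.exists_walk_length_eq_dist a b
  cases p with
  | nil => simp at h
  | @cons _ w _ hadj q =>
    refine ⟨w, hadj, ?_⟩
    have h1 := G.dist_le q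
    have h2 := hc.dist_triangle (u := a) (v := w) (w := b)
    have h3 := SimpleGraph.dist_eq_one_iff_adj.2 hadj
    simp only [SimpleGraph.Walk.length_cons] at hp
    omega

/-- Parallel edges carry the same orientation. -/
theorem orientation_parallel {V : Type*} {G : SimpleGraph V} (hG : MedianGraph G)
    {o : V → V → Bool} (ho : CubicalOrientation G o) {p q : V} (hpq : G.Adj p q) (k : ℕ) :
    ∀ u v : V, G.Adj u v → G.dist u p = k → G.dist v q = k → G.dist u q = k + 1 →
      G.dist v p = k + 1 → o u v = o p q := by
  have hc := hG.1
  induction k with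
  | zero =>
    intro u v _ h1 h2 _ _
    rw [hc.dist_eq_zero_iff] at h1 h2
    rw [h1, h2]
  | succ k ih =>
    intro u v huv h1 h2 h3 h4
    obtain ⟨w, huw, hw⟩ := exists_step hc h1
    obtain ⟨m, ⟨m1, m2, m3⟩, -⟩ := hG.2 v w q
    have dpq := SimpleGraph.dist_eq_one_iff_adj.2 hpq
    have duv := SimpleGraph.dist_eq_one_iff_adj.2 huv
    have duw := SimpleGraph.dist_eq_one_iff_adj.2 huw
    have t1 := hc.dist_triangle (u := w) (v := p) (w := q)
    have t2 := hc.dist_triangle (u := u) (v := w) (w := q)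
    have t3 := hc.dist_triangle (u := v) (v := u) (w := w)
    have t4 := hc.dist_triangle (u := v) (v := w) (w := p)
    have c1 := G.dist_comm (u := v) (v := u)
    have c2 := G.dist_comm (u := w) (v := m)
    have c3 := G.dist_comm (u := q) (v := p)
    have t5 := hc.dist_triangle (u := v) (v := m) (w := p)
    have t6 := hc.dist_triangle (u := m) (v := q) (w := p)
    have hvm : G.dist v m = 1 := by omega
    have hwm : G.dist w m = 1 := by omega
    have avm := SimpleGraph.dist_eq_one_iff_adj.1 hvm
    have awm := SimpleGraph.dist_eq_one_iff_adj.1 hwm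
    rw [← ih w m awm hw (by omega) (by omega) (by omega)]
    refine ho.2 u v w m huv.ne huw.ne ?_ ?_ avm.ne awm.ne huv awm huw avm
    · rintro rfl; omega
    · rintro rfl; omega

theorem dist_map_le {V : Type*} {G : SimpleGraph V} (hc : G.Connected) (f : V → V)
    (hadj : ∀ u v : V, G.Adj u v → G.Adj (f u) (f v)) (a b : V) :
    G.dist (f a) (f b) ≤ G.dist a b := by
  obtain ⟨p, hp⟩ := hc.exists_walk_length_eq_dist a b
  have := G.dist_le (p.map (⟨f, fun {u v} h => hadj u v h⟩ : G →g G))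
  rw [SimpleGraph.Walk.length_map, hp] at this
  exact this

theorem dist_iterate {V : Type*} {G : SimpleGraph V} {f : V → V}
    (hf : ∀ a b, G.dist (f a) (f b) = G.dist a b) (n : ℕ) (a b : V) :
    G.dist (f^[n] a) (f^[n] b) = G.dist a b := by
  induction n with
  | zero => rfl
  | succ n ih => rw [Function.iterate_succ_apply', Function.iterate_succ_apply', hf, ih]

theorem dist_iterate_le {V : Type*} {G : SimpleGraph V} (hc : G.Connected) {f : V → V}
    (hf : ∀ a b, G.dist (f a) (f b) = G.dist a b) (n : ℕ) (x : V) :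
    G.dist x (f^[n] x) ≤ n * G.dist x (f x) := by
  induction n with
  | zero => simp
  | succ n ih =>
    have t := hc.dist_triangle (u := x) (v := f^[n] x) (w := f^[n+1] x)
    rw [Function.iterate_succ_apply, dist_iterate hf] at t
    rw [Function.iterate_succ_apply, Nat.succ_mul]
    omega

theorem iterate_or {V : Type*} {G : SimpleGraph V} {o : V → V → Bool} {f : V → V}
    (hadj : ∀ u v : V, G.Adj u v ↔ G.Adj (f u) (f v))
    (hpres : ∀ u v : V, G.Adj u v → o (f u) (f v) = o u v) (n : ℕ) {u v : V} (h : G.Adj u v) :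
    G.Adj (f^[n] u) (f^[n] v) ∧ o (f^[n] u) (f^[n] v) = o u v := by
  induction n with
  | zero => exact ⟨h, rfl⟩
  | succ n ih =>
    rw [Function.iterate_succ_apply', Function.iterate_succ_apply']
    exact ⟨(hadj _ _).1 ih.1, (hpres _ _ ih.1).trans ih.2⟩

/-- The main computation, by induction over all minimizers simultaneously. -/
theorem translation_aux {V : Type*} {G : SimpleGraph V} (hG : MedianGraph G)
    {o : V → V → Bool} (ho : CubicalOrientation G o) {f : V → V}
    (hbij : Function.Bijective f)
    (hadj : ∀ u v : V, G.Adj u v ↔ G.Adj (f u) (f v))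
    (hpres : ∀ u v : V, G.Adj u v → o (f u) (f v) = o u v)
    (hf : ∀ a b, G.dist (f a) (f b) = G.dist a b) (d : ℕ) (hd : ∀ y, d ≤ G.dist y (f y)) (n : ℕ) :
    ∀ x, G.dist x (f x) = d → G.dist x (f^[n] x) = n * d := by
  have hc := hG.1
  induction n with
  | zero => intro x _; simp
  | succ n ih =>
    intro x hx
    rcases n with _ | n
    · simpa using hx
    obtain ⟨m, ⟨m1, m2, m3⟩, -⟩ := hG.2 x (f^[n+1] x) (f^[n+1+1] x)
    have hlast : G.dist (f^[n+1] x) (f^[n+1+1] x) = d := by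
      rw [Function.iterate_succ_apply f (n+1), dist_iterate hf, hx]
    have hxn := ih x hx
    rcases hk : G.dist (f^[n+1] x) m with _ | k
    · rw [hc.dist_eq_zero_iff] at hk
      subst hk
      rw [m3, hxn, hlast]; ring
    · exfalso
      obtain ⟨y, hy, hym⟩ := exists_step hc hk
      obtain ⟨z, rfl⟩ := (hbij.iterate (n+1)).2 y
      have dxy := SimpleGraph.dist_eq_one_iff_adj.2 hy
      have hxz : G.dist x z = 1 := by rw [← dxy, dist_iterate hf]
      have axz := SimpleGraph.dist_eq_one_iff_adj.1 hxz
      -- distances of the new vertex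
      have t1 := hc.dist_triangle (u := f^[n+1] z) (v := m) (w := f^[n+1+1] x)
      have e1 : G.dist (f^[n+1] z) (f^[n+1+1] x) = G.dist z (f x) := by
        rw [Function.iterate_succ_apply f (n+1), dist_iterate hf]
      have t2 := hc.dist_triangle (u := x) (v := m) (w := f^[n+1] z)
      have c1 := G.dist_comm (u := m) (v := f^[n+1] z)
      have c2 := G.dist_comm (u := m) (v := f^[n+1] x)
      have t3 := hc.dist_triangle (u := z) (v := f x) (w := f z)
      have e2 := hf x z
      have hz : G.dist z (f z) = d := le_antisymm (by omega) (hd z)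
      have hzn := ih z hz
      have hle := dist_iterate_le hc hf n (f x)
      rw [← Function.iterate_succ_apply, Nat.succ_eq_add_one, hf, hx] at hle
      have t4 := hc.dist_triangle (u := z) (v := f x) (w := f^[n+1] x)
      have t5 := hc.dist_triangle (u := x) (v := z) (w := f^[n+1] x)
      have t6 := hc.dist_triangle (u := z) (v := x) (w := f^[n+1] z)
      have c3 := G.dist_comm (u := z) (v := x)
      have e3 : (n + 1) * d = n * d + d := by ring
      have key := orientation_parallel hG ho hy.symm (n * d + d - 1) x z axz
        (by omega) (by omega) (by omega) (by omega)
      have h2 := (iterate_or hadj hpres (n+1) axz).2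
      exact ho.1 _ _ hy (h2.trans key)

/-- Semisimplicity: an automorphism of a median graph preserving a cubical
orientation translates any point of its minimizing set by `n·ℓ(f)` under `fⁿ`;
in particular it is elliptic or loxodromic. -/
theorem orientation_preserving_automorphism_semisimple {V : Type*}
    (𝒢 : SimpleGraph V) (hG : MedianGraph 𝒢)
    (o : V → V → Bool) (ho : CubicalOrientation 𝒢 o)
    (f : V → V) (hbij : Function.Bijective f)
    (hadj : ∀ u v : V, 𝒢.Adj u v ↔ 𝒢.Adj (f u) (f v))
    (hpres : ∀ u v : V, 𝒢.Adj u v → o (f u) (f v) = o u v)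
    (x : V) (hmin : ∀ y : V, 𝒢.dist x (f x) ≤ 𝒢.dist y (f y)) :
    (∀ n : ℕ, 𝒢.dist x (f^[n] x) = n * 𝒢.dist x (f x)) ∧
      ((∃ v : V, f v = v) ∨
        ∃ L : ℤ → V, (∀ i j : ℤ, 𝒢.dist (L i) (L j) = (i - j).natAbs) ∧
          ∃ t : ℤ, t ≠ 0 ∧ ∀ i : ℤ, f (L i) = L (i + t)) := by
  have hc := hG.1
  have hf : ∀ a b, 𝒢.dist (f a) (f b) = 𝒢.dist a b := by
    intro a b
    refine le_antisymm (dist_map_le hc f (fun u v => (hadj u v).1) a b) ?_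
    have := dist_map_le hc (Equiv.ofBijective f hbij).symm (fun u v h => by
      rw [hadj]
      simpa [Equiv.ofBijective_apply_symm_apply] using h) (f a) (f b)
    simpa [Equiv.ofBijective_symm_apply_apply] using this
  have main : ∀ n : ℕ, 𝒢.dist x (f^[n] x) = n * 𝒢.dist x (f x) := fun n =>
    translation_aux hG ho hbij hadj hpres hf _ hmin n x rfl
  refine ⟨main, ?_⟩
  obtain ⟨d, hd⟩ : ∃ d, 𝒢.dist x (f x) = d := ⟨_, rfl⟩
  rw [hd] at main
  rcases Nat.eq_zero_or_pos d with h0 | hpos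
  · left
    refine ⟨x, ?_⟩
    rw [h0, hc.dist_eq_zero_iff] at hd
    exact hd.symm
  right
  obtain ⟨p, hp⟩ := hc.exists_walk_length_eq_dist x (f x)
  rw [hd] at hp
  let e : Equiv.Perm V := Equiv.ofBijective f hbij
  have he : ∀ v, e v = f v := fun v => rfl
  have hd0 : (d : ℤ) ≠ 0 := by omega
  have hnat : ∀ (n : ℕ) a b, 𝒢.dist ((e ^ n) a) ((e ^ n) b) = 𝒢.dist a b := by
    intro n a b
    rw [Equiv.Perm.coe_pow]
    exact dist_iterate hf n a b
  have hz : ∀ (n : ℤ) a b, 𝒢.dist ((e ^ n) a) ((e ^ n) b) = 𝒢.dist a b := by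
    intro n a b
    rcases Int.eq_nat_or_neg n with ⟨k, rfl | rfl⟩
    · rw [zpow_natCast]; exact hnat k a b
    · rw [← hnat k, ← Equiv.Perm.mul_apply, ← Equiv.Perm.mul_apply]
      simp
  let L : ℤ → V := fun i => (e ^ (i / d)) (p.getVert (i % d).toNat)
  have hLmul : ∀ a : ℤ, L (a * d) = (e ^ a) x := by
    intro a
    simp only [L]
    rw [Int.mul_ediv_cancel _ hd0, Int.mul_emod_left]
    simp
  have hshift : ∀ i, f (L i) = L (i + d) := by
    intro i
    simp only [L]
    rw [Int.add_ediv_of_dvd_right (dvd_refl _), Int.ediv_self hd0, Int.add_emod_right, ← he,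
      ← Equiv.Perm.mul_apply, add_comm, zpow_one_add]
  have hstep : ∀ i, 𝒢.dist (L i) (L (i + 1)) ≤ 1 := by
    intro i
    have hm0 := Int.emod_nonneg i hd0
    have hm1 := Int.emod_lt_of_pos i (by omega : (0 : ℤ) < d)
    have hi := Int.mul_ediv_add_emod i d
    have hadjp := p.adj_getVert_succ (i := (i % d).toNat) (by omega)
    have h1 := (SimpleGraph.dist_eq_one_iff_adj.2 hadjp).le
    have hL : L (i + 1) = (e ^ (i / d)) (p.getVert ((i % d).toNat + 1)) := by
      by_cases hcase : i % d + 1 < d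
      · have q1 : (i + 1) / d = i / d ∧ (i + 1) % d = i % d + 1 := by
          rw [Int.ediv_emod_unique (by omega)]
          exact ⟨by linarith, by omega, hcase⟩
        simp only [L]
        rw [q1.1, q1.2]
        congr 2
        omega
      · have q1 : i + 1 = (i / d + 1) * d := by
          have : i % d + 1 = d := by omega
          linarith
        rw [q1, hLmul, zpow_add_one, Equiv.Perm.mul_apply, he]
        congr 1
        have : (i % d).toNat + 1 = p.length := by omega
        rw [this, p.getVert_length]
    rw [hL]
    simp only [L]
    rw [hz]
    exact h1
  have hup : ∀ (n : ℕ) i, 𝒢.dist (L i) (L (i + n)) ≤ n := by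
    intro n i
    induction n with
    | zero => simp
    | succ n ih =>
      have t := hc.dist_triangle (u := L i) (v := L (i + n)) (w := L (i + n + 1))
      have := hstep (i + n)
      push_cast
      rw [← add_assoc]
      omega
  have hpos' : ∀ (n : ℕ) i, 𝒢.dist (L i) (L (i + n)) = n := by
    intro n i
    refine le_antisymm (hup n i) ?_
    have hm0 := Int.emod_nonneg i hd0
    have hi := Int.mul_ediv_add_emod i d
    obtain ⟨r, hr⟩ := Int.eq_ofNat_of_zero_le hm0
    -- enclose between translates of the base point
    obtain ⟨s, hs⟩ : ∃ s : ℕ, r + n + s = (r + n) * d :=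
      ⟨(r + n) * d - (r + n), by
        have := Nat.le_mul_of_pos_right (r + n) hpos
        omega⟩
    have hfar : 𝒢.dist (L (i / d * d)) (L ((i / d + (r + n : ℕ)) * d)) = (r + n) * d := by
      rw [hLmul, hLmul, zpow_add, Equiv.Perm.mul_apply, hz, zpow_natCast, Equiv.Perm.coe_pow]
      exact main (r + n)
    have u1 := hup r (i / d * d)
    have u2 := hup s (i + n)
    have g1 : i / d * d + r = i := by linarith
    have g2 : i + n + s = (i / d + (r + n : ℕ)) * d := by
      have hs' : (r : ℤ) + n + s = (r + n) * d := by exact_mod_cast hs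
      push_cast
      linarith
    rw [g1] at u1
    rw [g2] at u2
    have t1 := hc.dist_triangle (u := L (i / d * d)) (v := L i)
      (w := L ((i / d + (r + n : ℕ)) * d))
    have t2 := hc.dist_triangle (u := L i) (v := L (i + n))
      (w := L ((i / d + (r + n : ℕ)) * d))
    omega
  refine ⟨L, ?_, d, hd0, hshift⟩
  intro i j
  rcases le_total i j with h | h
  · have := hpos' (i - j).natAbs i
    rwa [show i + ((i - j).natAbs : ℤ) = j by omega] at this
  · have := hpos' (i - j).natAbs j
    rw [SimpleGraph.dist_comm]
    rwa [show j + ((i - j).natAbs : ℤ) = i by omega] at this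
end

section
/- Let a group G act by automorphisms on a median graph 𝒢 endowed with a cubical orientation o, with every element of G preserving o, and suppose some orbit is bounded: there exist a vertex x and N ∈ ℕ with dist(x, g·x) ≤ N for all g ∈ G. Then G fixes a vertex: there is a vertex v of 𝒢 with g·v = v for every g ∈ G. -/
section helpers

/-- The halfspace of the vertices closer to `a` than to `b`. -/
def HS {V : Type*} (G : SimpleGraph V) (a b : V) : Set V := {z | G.dist z a < G.dist z b}

/-- The set of all halfspaces. -/
def HSs {V : Type*} (G : SimpleGraph V) : Set (Set V) :=
  {W | ∃ a b, G.Adj a b ∧ W = HS G a b}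

/-- Geodesic convexity. -/
def GCvx {V : Type*} (G : SimpleGraph V) (C : Set V) : Prop :=
  ∀ u ∈ C, ∀ v ∈ C, ∀ m, G.dist u m + G.dist m v = G.dist u v → m ∈ C

variable {V : Type*} {G : SimpleGraph V}

theorem nbr_toward (hc : G.Connected) {u m : V} (h : u ≠ m) :
    ∃ u', G.Adj u u' ∧ G.dist u m = G.dist u' m + 1 := by
  obtain ⟨p, hp⟩ := hc.exists_walk_length_eq_dist u m
  cases p with
  | nil => exact absurd rfl h
  | @cons _ w _ hadj q =>
    refine ⟨w, hadj, ?_⟩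
    have h1 := SimpleGraph.dist_le q
    have h2 := hc.dist_triangle (u := u) (v := w) (w := m)
    have h3 := SimpleGraph.dist_eq_one_iff_adj.2 hadj
    simp only [SimpleGraph.Walk.length_cons] at hp
    omega

theorem edge_par (hG : MedianGraph G) {a b : V} (hab : G.Adj a b) (z : V) :
    G.dist z b = G.dist z a + 1 ∨ G.dist z a = G.dist z b + 1 := by
  obtain ⟨m, ⟨h1, h2, h3⟩, -⟩ := hG.2 a b z
  have hd := SimpleGraph.dist_eq_one_iff_adj.2 hab
  have e1 := G.dist_comm (u := z) (v := a)
  have e2 := G.dist_comm (u := z) (v := b)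
  have e3 := G.dist_comm (u := m) (v := b)
  have e4 := G.dist_comm (u := m) (v := a)
  omega

theorem mem_HS {a b z : V} : z ∈ HS G a b ↔ G.dist z a < G.dist z b := Iff.rfl

theorem HS_compl (hG : MedianGraph G) {a b : V} (hab : G.Adj a b) :
    (HS G a b)ᶜ = HS G b a := by
  ext z
  have := edge_par hG hab z
  simp only [Set.mem_compl_iff, mem_HS]
  omega

theorem square_sub (hG : MedianGraph G) {a b a' b' : V} (hab : G.Adj a b) (hab' : G.Adj a' b')
    (haa : G.Adj a a') (hbb : G.Adj b b') (h1 : a ≠ b') (h2 : b ≠ a') :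
    HS G a b ⊆ HS G a' b' := by
  intro z hz
  by_contra hz'
  simp only [mem_HS] at hz hz'
  have p1 := edge_par hG hab z
  have p2 := edge_par hG hab' z
  have p3 := edge_par hG haa z
  have p4 := edge_par hG hbb z
  obtain ⟨m, ⟨m1, m2, m3⟩, -⟩ := hG.2 a b' z
  have e1 := G.dist_comm (u := z) (v := a)
  have e2 := G.dist_comm (u := z) (v := b')
  have e3 := G.dist_comm (u := m) (v := b')
  have e4 := G.dist_comm (u := m) (v := a)
  have e5 := G.dist_comm (u := m) (v := z)
  have q1 := edge_par hG hbb a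
  have q2 := SimpleGraph.dist_eq_one_iff_adj.2 hab
  have q3 : G.dist a b' ≠ 0 := fun h => h1 ((hG.1.dist_eq_zero_iff).1 h)
  have am : G.dist a m = 1 := by omega
  have bm : G.dist b' m = 1 := by omega
  have nb : m ≠ b := by rintro rfl; omega
  have na : m ≠ a' := by rintro rfl; omega
  have key : ∀ {s t c : V}, G.dist s c = 1 → G.dist t c = 1 → s ≠ t → G.dist s t = 2 := by
    intro s t c hs ht hst
    have r1 := edge_par hG (SimpleGraph.dist_eq_one_iff_adj.1 ht) s
    have r2 : G.dist s t ≠ 0 := fun h => hst ((hG.1.dist_eq_zero_iff).1 h)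
    omega
  have ba := SimpleGraph.dist_eq_one_iff_adj.2 hab.symm
  have a'a := SimpleGraph.dist_eq_one_iff_adj.2 haa.symm
  have aa' := SimpleGraph.dist_eq_one_iff_adj.2 haa
  have bb' := SimpleGraph.dist_eq_one_iff_adj.2 hbb
  have b'b := SimpleGraph.dist_eq_one_iff_adj.2 hbb.symm
  have a'b' := SimpleGraph.dist_eq_one_iff_adj.2 hab'
  have b'a' := SimpleGraph.dist_eq_one_iff_adj.2 hab'.symm
  have ma : G.dist m a = 1 := by omega
  have mb : G.dist m b' = 1 := by omega
  have d1 := key ba a'a h2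
  have d2 := key ba ma nb.symm
  have d3 := key a'a ma na.symm
  obtain ⟨w, -, hw⟩ := hG.2 b a' m
  have w1 := hw a ⟨by omega, by omega, by omega⟩
  have w2 := hw b' ⟨by omega, by omega, by omega⟩
  exact h1 (w1.trans w2.symm)

theorem square_eq (hG : MedianGraph G) {a b a' b' : V} (hab : G.Adj a b) (hab' : G.Adj a' b')
    (haa : G.Adj a a') (hbb : G.Adj b b') (h1 : a ≠ b') (h2 : b ≠ a') :
    HS G a b = HS G a' b' :=
  Set.Subset.antisymm (square_sub hG hab hab' haa hbb h1 h2)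
    (square_sub hG hab' hab haa.symm hbb.symm h2.symm h1.symm)

theorem par_edges (hG : MedianGraph G) {o : V → V → Bool} (ho : CubicalOrientation G o) (n : ℕ) :
    ∀ a b c d : V, G.Adj a b → G.Adj c d → G.dist a c = n → c ∈ HS G a b → d ∉ HS G a b →
      HS G a b = HS G c d ∧ o a b = o c d := by
  induction n with
  | zero =>
    intro a b c d hab hcd hac hc hd
    have hac' := (hG.1.dist_eq_zero_iff).1 hac
    subst hac'
    simp only [mem_HS] at hc hd
    have q1 := edge_par hG hab d
    have q2 := SimpleGraph.dist_eq_one_iff_adj.2 hcd.symm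
    have : G.dist d b = 0 := by omega
    have := (hG.1.dist_eq_zero_iff).1 this
    subst this
    exact ⟨rfl, rfl⟩
  | succ n ih =>
    intro a b c d hab hcd hac hc hd
    simp only [mem_HS] at hc hd
    have q1 := edge_par hG hab d
    have q2 := edge_par hG hab c
    have q3 := edge_par hG hcd a
    have q4 := edge_par hG hcd b
    have e1 := G.dist_comm (u := c) (v := a)
    have e2 := G.dist_comm (u := c) (v := b)
    have e3 := G.dist_comm (u := d) (v := a)
    have e4 := G.dist_comm (u := d) (v := b)
    have hne : a ≠ c := by rintro rfl; simp at hac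
    obtain ⟨a', haa, ha'⟩ := nbr_toward hG.1 hne
    have f0 := SimpleGraph.dist_eq_one_iff_adj.2 hab
    have f1 := edge_par hG haa d
    have f2 := edge_par hG hcd a'
    have f3 := edge_par hG haa b
    have f5 := edge_par hG hab a'
    have e5 := G.dist_comm (u := d) (v := a')
    have e6 := G.dist_comm (u := a') (v := b)
    have e7 := G.dist_comm (u := a) (v := b)
    have t1 := hG.1.dist_triangle (u := b) (v := a') (w := c)
    have hba' : G.dist b a' = 2 := by omega
    obtain ⟨m, ⟨m1, m2, m3⟩, -⟩ := hG.2 a' b d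
    have e8 := G.dist_comm (u := m) (v := b)
    have e9 := G.dist_comm (u := m) (v := d)
    have am : G.dist a' m = 1 := by omega
    have bm : G.dist b m = 1 := by omega
    have Aam := SimpleGraph.dist_eq_one_iff_adj.1 am
    have Abm := SimpleGraph.dist_eq_one_iff_adj.1 bm
    have n1 : a ≠ m := by rintro rfl; omega
    have n2 : b ≠ a' := by rintro rfl; simp at hba'
    have hsq := square_eq hG hab Aam haa Abm n1 n2
    have hoo := ho.2 a b a' m hab.ne haa.ne n1 n2 Abm.ne Aam.ne hab Aam haa Abm
    obtain ⟨i1, i2⟩ := ih a' m c d Aam hcd (by omega) (hsq ▸ hc) (by rw [← hsq]; exact hd)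
    exact ⟨hsq.trans i1, hoo.trans i2⟩

theorem cross_edge (hc : G.Connected) (P : Set V) (n : ℕ) : ∀ u m : V, G.dist u m = n →
    u ∈ P → m ∉ P → ∃ c d, G.Adj c d ∧ c ∈ P ∧ d ∉ P ∧
      G.dist u m = G.dist u c + 1 + G.dist d m := by
  induction n with
  | zero =>
    intro u m h hu hm
    exact absurd ((hc.dist_eq_zero_iff.1 h) ▸ hu) hm
  | succ n ih =>
    intro u m h hu hm
    obtain ⟨u', h1, h2⟩ := nbr_toward hc (u := u) (m := m) (by rintro rfl; exact hm hu)
    by_cases hu' : u' ∈ P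
    · obtain ⟨c, d, g1, g2, g3, g4⟩ := ih u' m (by omega) hu' hm
      refine ⟨c, d, g1, g2, g3, ?_⟩
      have t1 := hc.dist_triangle (u := u) (v := u') (w := c)
      have t2 := SimpleGraph.dist_eq_one_iff_adj.2 h1
      have t3 := hc.dist_triangle (u := u) (v := c) (w := m)
      have t4 := hc.dist_triangle (u := c) (v := d) (w := m)
      have t5 := SimpleGraph.dist_eq_one_iff_adj.2 g1
      omega
    · exact ⟨u, u', h1, hu, hu', by simp; omega⟩

theorem HSs_eq (hG : MedianGraph G) {o : V → V → Bool} (ho : CubicalOrientation G o)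
    {W : Set V} (hW : W ∈ HSs G) {c d : V} (hcd : G.Adj c d) (hc : c ∈ W) (hd : d ∉ W) :
    W = HS G c d := by
  obtain ⟨a, b, hab, rfl⟩ := hW
  exact (par_edges hG ho _ a b c d hab hcd rfl hc hd).1

theorem HSs_compl (hG : MedianGraph G) {W : Set V} (hW : W ∈ HSs G) : Wᶜ ∈ HSs G := by
  obtain ⟨a, b, hab, rfl⟩ := hW
  exact ⟨b, a, hab.symm, HS_compl hG hab⟩

theorem HSs_nonempty {W : Set V} (hW : W ∈ HSs G) : W.Nonempty := by
  obtain ⟨a, b, hab, rfl⟩ := hW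
  exact ⟨a, by simp [mem_HS, SimpleGraph.dist_eq_one_iff_adj.2 hab]⟩

theorem HSs_cvx (hG : MedianGraph G) {o : V → V → Bool} (ho : CubicalOrientation G o)
    {W : Set V} (hW : W ∈ HSs G) : GCvx G W := by
  intro u hu v hv m hm
  by_contra hmW
  obtain ⟨c, d, hcd, hc, hd, h⟩ := cross_edge hG.1 W _ u m rfl hu hmW
  have e := HSs_eq hG ho hW hcd hc hd
  rw [e, mem_HS] at hv
  have t1 := hG.1.dist_triangle (u := u) (v := c) (w := v)
  have t2 := hG.1.dist_triangle (u := d) (v := m) (w := v)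
  have e1 := G.dist_comm (u := v) (v := c)
  have e2 := G.dist_comm (u := v) (v := d)
  omega

theorem HSs_sep (hG : MedianGraph G) {u v : V} (h : u ≠ v) : ∃ W ∈ HSs G, u ∈ W ∧ v ∉ W := by
  obtain ⟨w, h1, h2⟩ := nbr_toward hG.1 h
  refine ⟨HS G u w, ⟨u, w, h1, rfl⟩, ?_, ?_⟩
  · simp [mem_HS, SimpleGraph.dist_eq_one_iff_adj.2 h1]
  · rw [mem_HS, G.dist_comm (u := v), G.dist_comm (u := v)]; omega

/-- halfspaces separating `u` from `v`. -/
def SepHS (G : SimpleGraph V) (u v : V) : Set (Set V) := {W | W ∈ HSs G ∧ u ∈ W ∧ v ∉ W}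

theorem Sep_fin (hG : MedianGraph G) {o : V → V → Bool} (ho : CubicalOrientation G o) (u v : V) :
    ∃ S : Finset (Set V), SepHS G u v ⊆ S ∧ S.card ≤ G.dist u v := by
  classical
  obtain ⟨p, hp⟩ := hG.1.exists_walk_length_eq_dist u v
  refine ⟨(p.darts.map (fun d => HS G d.fst d.snd)).toFinset, ?_, ?_⟩
  · rintro W ⟨hW, hu, hv⟩
    obtain ⟨d, hd, h1, h2⟩ := p.exists_boundary_dart W hu hv
    simp only [List.coe_toFinset, List.mem_map, Set.mem_ofPred_eq]
    exact ⟨d, hd, (HSs_eq hG ho hW d.adj h1 h2).symm⟩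
  · refine (List.toFinset_card_le _).trans ?_
    simp [hp]

/-- The selection lemma. -/
theorem select (hG : MedianGraph G) {o : V → V → Bool} (ho : CubicalOrientation G o)
    (C : Set V) (hC : GCvx G C) (big : Set V → Prop)
    (h1 : ∀ W ∈ HSs G, big W → (W ∩ C).Nonempty)
    (h2 : ∀ W ∈ HSs G, ∀ W' ∈ HSs G, big W → W ∩ C ⊆ W' → big W')
    (h3 : ∀ W ∈ HSs G, big W → ¬ big Wᶜ)
    (x : V) (hx : x ∈ C) (hfin : {W | W ∈ HSs G ∧ big W ∧ x ∉ W}.Finite) :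
    ∃ v ∈ C, ∀ W ∈ HSs G, big W → v ∈ W := by
  classical
  let bad : V → Set (Set V) := fun v => {W | W ∈ HSs G ∧ big W ∧ v ∉ W}
  suffices H : ∀ n : ℕ, ∀ v ∈ C, (bad v).Finite → (bad v).ncard = n →
      ∃ v ∈ C, ∀ W ∈ HSs G, big W → v ∈ W from H _ x hx hfin rfl
  intro n
  induction n using Nat.strong_induction_on with
  | _ n ih =>
    intro v hv hf hn
    by_cases hall : ∀ W ∈ HSs G, big W → v ∈ W
    · exact ⟨v, hv, hall⟩
    push Not at hall
    obtain ⟨W, hW, hb, hvW⟩ := hall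
    obtain ⟨p, ⟨hpW, hpC⟩, hmin⟩ : ∃ p ∈ W ∩ C, ∀ q ∈ W ∩ C, G.dist v p ≤ G.dist v q := by
      have := (measure (fun q => G.dist v q)).wf.has_min (W ∩ C) (h1 W hW hb)
      obtain ⟨p, hp, hpm⟩ := this
      exact ⟨p, hp, fun q hq => not_lt.1 (hpm q hq)⟩
    have gate : ∀ W' ∈ HSs G, p ∈ W' → v ∉ W' → big W' := by
      intro W' hW' hp' hv'
      refine h2 W hW W' hW' hb ?_
      rintro q ⟨hqW, hqC⟩
      by_contra hq'
      obtain ⟨m, ⟨m1, m2, m3⟩, -⟩ := hG.2 v p q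
      have mW := HSs_cvx hG ho hW p hpW q hqW m m2.symm
      have mC := hC p hpC q hqC m m2.symm
      have := hmin m ⟨mW, mC⟩
      have hmp : G.dist m p = 0 := by omega
      have hmp := hG.1.dist_eq_zero_iff.1 hmp
      subst hmp
      exact HSs_cvx hG ho (HSs_compl hG hW') v hv' q hq' m m3.symm hp'
    have hsub : bad p ⊂ bad v := by
      refine ⟨?_, fun hh => (hh (show W ∈ bad v from ⟨hW, hb, hvW⟩)).2.2 hpW⟩
      rintro W' ⟨a1, a2, a3⟩
      refine ⟨a1, a2, fun hv' => ?_⟩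
      exact h3 W' a1 a2 (gate _ (HSs_compl hG a1) a3 (fun h => h hv'))
    exact ih _ (hn ▸ Set.ncard_lt_ncard hsub hf) p hpC (hf.subset hsub.1) rfl

end helpers

section hilbert

/-- Chebyshev centres relative to a closed convex set. -/
theorem cheb {E ι : Type*} [NormedAddCommGroup E] [InnerProductSpace ℝ E] [CompleteSpace E]
    (K : Set E) (hK : IsClosed K) (hcv : Convex ℝ K) (hne : K.Nonempty) [Nonempty ι]
    (b : ι → E) (M : ℝ) (hb : ∀ i, ‖b i‖ ≤ M) :
    ∃ c ∈ K, ∃ s : ℝ, (∀ i, ‖c - b i‖ ^ 2 ≤ s) ∧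
      ∀ c' ∈ K, (∀ i, ‖c' - b i‖ ^ 2 ≤ s) → c' = c := by
  let A : Set ℝ := {s | ∃ c ∈ K, ∀ i, ‖c - b i‖ ^ 2 ≤ s}
  have hA0 : ∀ s ∈ A, 0 ≤ s := by
    rintro s ⟨c, -, h⟩
    exact (sq_nonneg _).trans (h (Classical.arbitrary ι))
  have hAb : BddBelow A := ⟨0, hA0⟩
  have hAne : A.Nonempty := by
    obtain ⟨c, hc⟩ := hne
    refine ⟨(‖c‖ + M) ^ 2, c, hc, fun i => ?_⟩
    have := norm_sub_le c (b i)
    have := hb i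
    have := norm_nonneg (c - b i)
    gcongr
    linarith
  set s0 := sInf A with hs0
  have key : ∀ s, ∀ c ∈ K, ∀ c' ∈ K, (∀ i, ‖c - b i‖ ^ 2 ≤ s) → (∀ i, ‖c' - b i‖ ^ 2 ≤ s) →
      ‖c - c'‖ ^ 2 ≤ 4 * (s - s0) := by
    intro s c hc c' hc' h h'
    have hmid : (1 / 2 : ℝ) • c + (1 / 2 : ℝ) • c' ∈ K :=
      hcv hc hc' (by norm_num) (by norm_num) (by norm_num)
    have : s - ‖c - c'‖ ^ 2 / 4 ∈ A := by
      refine ⟨_, hmid, fun i => ?_⟩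
      have par := parallelogram_law_with_norm ℝ (c - b i) (c' - b i)
      have e1 : (c - b i) + (c' - b i) = (2 : ℝ) • ((1 / 2 : ℝ) • c + (1 / 2 : ℝ) • c' - b i) := by
        module
      have e2 : (c - b i) - (c' - b i) = c - c' := by abel
      rw [e1, e2, norm_smul] at par
      have := h i
      have := h' i
      norm_num at par ⊢
      nlinarith
    have := csInf_le hAb this
    linarith
  have hseq : ∀ n : ℕ, ∃ c ∈ K, ∀ i, ‖c - b i‖ ^ 2 ≤ s0 + 1 / ((n : ℝ) + 1) := by
    intro n
    have hp : (0 : ℝ) < 1 / ((n : ℝ) + 1) := by positivity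
    obtain ⟨s, ⟨c, hc, h⟩, hs⟩ := Real.lt_sInf_add_pos hAne hp
    exact ⟨c, hc, fun i => (h i).trans hs.le⟩
  choose u huK hu using hseq
  have hcau : CauchySeq u := by
    refine cauchySeq_of_le_tendsto_0 (fun n : ℕ => Real.sqrt (4 * (1 / ((n : ℝ) + 1)))) ?_ ?_
    · intro n m k hn hm
      rw [dist_eq_norm]
      apply Real.le_sqrt_of_sq_le
      have mono : ∀ n : ℕ, k ≤ n → 1 / ((n : ℝ) + 1) ≤ 1 / ((k : ℝ) + 1) := by
        intro n hn
        have : (k : ℝ) ≤ n := by exact_mod_cast hn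
        gcongr
      have := key (s0 + 1 / ((k : ℝ) + 1)) (u n) (huK n) (u m) (huK m)
        (fun i => (hu n i).trans (by linarith [mono n hn]))
        (fun i => (hu m i).trans (by linarith [mono m hm]))
      linarith
    · have h1 := (tendsto_one_div_add_atTop_nhds_zero_nat (𝕜 := ℝ)).const_mul 4
      have h2 : Filter.Tendsto (fun n : ℕ => Real.sqrt (4 * (1 / ((n : ℝ) + 1)))) Filter.atTop
          (nhds (Real.sqrt (4 * 0))) := (Real.continuous_sqrt.tendsto _).comp h1
      rwa [mul_zero, Real.sqrt_zero] at h2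
  obtain ⟨c, hc⟩ := cauchySeq_tendsto_of_complete hcau
  have hcK : c ∈ K := hK.mem_of_tendsto hc (Filter.Eventually.of_forall huK)
  have hcs : ∀ i, ‖c - b i‖ ^ 2 ≤ s0 := by
    intro i
    have h1 : Filter.Tendsto (fun n => ‖u n - b i‖ ^ 2) Filter.atTop (nhds (‖c - b i‖ ^ 2)) :=
      ((hc.sub_const _).norm).pow 2
    have h2 := (tendsto_one_div_add_atTop_nhds_zero_nat (𝕜 := ℝ)).const_add s0
    rw [add_zero] at h2
    exact le_of_tendsto_of_tendsto' h1 h2 (fun n => hu n i)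
  refine ⟨c, hcK, s0, hcs, fun c' hc' h' => ?_⟩
  have := key s0 c' hc' c hcK h' hcs
  have h0 : ‖c' - c‖ = 0 := by
    have := norm_nonneg (c' - c)
    nlinarith
  exact sub_eq_zero.1 (norm_eq_zero.1 h0)

theorem l2norm_sq {Ω : Type*} (y : lp (fun _ : Ω => ℝ) 2) : ‖y‖ ^ 2 = ∑' w, (y w) ^ 2 := by
  have := lp.norm_rpow_eq_tsum (p := 2) (by norm_num) y
  simpa using this

theorem mem_l2 {Ω : Type*} {f : Ω → ℝ} : Memℓp f 2 ↔ Summable (fun w => (f w) ^ 2) := by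
  rw [memℓp_gen_iff (by norm_num)]
  simp

theorem l2fix {Γ Ω : Type*} [Group Γ] [MulAction Γ Ω] (A : Ω → ℝ) (N : ℕ)
    (hfin : ∀ g : Γ, ∃ S : Finset Ω, S.card ≤ N ∧ ∀ w, w ∉ S → A (g⁻¹ • w) = A w)
    (hA : ∀ w w', |A w - A w'| ≤ 1)
    (K : Set (Ω → ℝ)) (hKc : IsClosed K) (hcv : Convex ℝ K)
    (hinv : ∀ g : Γ, ∀ c ∈ K, (fun w => c (g • w)) ∈ K) (hAK : A ∈ K) :
    ∃ c ∈ K, (∀ (g : Γ) w, c (g • w) = c w) ∧ Summable (fun w => (c w - A w) ^ 2) := by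
  have hle : ∀ w w', (A w - A w') ^ 2 ≤ 1 := fun w w' => by
    have := hA w w'
    rw [← sq_abs]
    have := abs_nonneg (A w - A w')
    nlinarith
  have hmem : ∀ g : Γ, Memℓp (fun w => A (g⁻¹ • w) - A w) 2 := by
    intro g
    rw [mem_l2]
    obtain ⟨S, -, hS⟩ := hfin g
    exact summable_of_ne_finset_zero (s := S) (fun w hw => by simp [hS w hw])
  let E := lp (fun _ : Ω => ℝ) 2
  have cadd : ∀ (u v : E) w, (u + v) w = u w + v w := fun _ _ _ => rfl
  have csub : ∀ (u v : E) w, (u - v) w = u w - v w := fun _ _ _ => rfl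
  have csmul : ∀ (r : ℝ) (v : E) w, (r • v) w = r * v w := fun _ _ _ => rfl
  let φ : Γ → E := fun g => ⟨fun w => A (g⁻¹ • w) - A w, hmem g⟩
  have hφ : ∀ g w, φ g w = A (g⁻¹ • w) - A w := fun g w => rfl
  have hφn : ∀ g, ‖φ g‖ ≤ Real.sqrt N := by
    intro g
    apply Real.le_sqrt_of_sq_le
    rw [l2norm_sq]
    obtain ⟨S, hc, hS⟩ := hfin g
    rw [tsum_eq_sum (s := S) (fun w hw => by simp [hφ, hS w hw])]
    calc ∑ w ∈ S, (φ g w) ^ 2 ≤ ∑ w ∈ S, (1 : ℝ) := Finset.sum_le_sum (fun w _ => hle _ _)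
      _ = S.card := by simp
      _ ≤ N := by exact_mod_cast hc
  let K' : Set E := {y | (fun w => y w + A w) ∈ K}
  have hK'c : IsClosed K' := by
    refine hKc.preimage (f := fun (y : E) (w : Ω) => y w + A w) ?_
    refine continuous_pi fun w => ?_
    exact ((lp.evalCLM ℝ (fun _ : Ω => ℝ) 2 w).continuous).add continuous_const
  have hK'v : Convex ℝ K' := by
    intro y hy z hz s t hs ht hst
    have := hcv hy hz hs ht hst
    show (fun w => (s • y + t • z : E) w + A w) ∈ K
    convert this using 1
    ext w
    simp only [cadd, csmul, Pi.add_apply, Pi.smul_apply, smul_eq_mul]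
    linear_combination (-A w) * hst
  have h0 : (0 : E) ∈ K' := by
    show (fun w => (0 : E) w + A w) ∈ K
    simpa using hAK
  obtain ⟨y, hy, s, hs, huniq⟩ := cheb K' hK'c hK'v ⟨0, h0⟩ φ _ hφn
  have hmv : ∀ (g : Γ) (z : E), ∃ z' : E, (∀ w, z' w = z (g⁻¹ • w)) ∧ ‖z'‖ ^ 2 = ‖z‖ ^ 2 := by
    intro g z
    have hz := mem_l2.1 z.2
    refine ⟨⟨fun w => z (g⁻¹ • w), mem_l2.2 ?_⟩, fun w => rfl, ?_⟩
    · exact ((MulAction.toPerm g⁻¹ : Equiv.Perm Ω).summable_iff (f := fun w => (z w) ^ 2)).2 hz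
    · rw [l2norm_sq, l2norm_sq]
      exact (MulAction.toPerm g⁻¹ : Equiv.Perm Ω).tsum_eq (fun w => (z w) ^ 2)
  refine ⟨fun w => y w + A w, hy, ?_, ?_⟩
  · have main : ∀ (g : Γ) w, y (g⁻¹ • w) + A (g⁻¹ • w) = y w + A w := by
      intro g w
      obtain ⟨z, hz, -⟩ := hmv g y
      have : z + φ g = y := by
        apply huniq
        · have := hinv g⁻¹ _ hy
          show (fun w => (z + φ g : E) w + A w) ∈ K
          convert this using 1
          ext w
          simp only [cadd, hz, hφ]
          ring
        · intro k
          obtain ⟨z', hz', hn⟩ := hmv g (y - φ (g⁻¹ * k))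
          have : z + φ g - φ k = z' := by
            ext w
            simp [cadd, csub, hz, hz', hφ, mul_smul]
            ring
          rw [this, hn]
          exact hs _
      have h2 := (congrArg (fun u : E => u w) this : (z + φ g : E) w = y w)
      rw [cadd, hz, hφ] at h2
      linarith
    intro g w
    have := main g⁻¹ w
    simpa using this
  · have := mem_l2.1 y.2
    simpa using this

end hilbert

section action

open scoped Pointwise

variable {V : Type*} {G : SimpleGraph V} {Γ : Type*} [Group Γ] [MulAction Γ V]

theorem act_dist (hG : MedianGraph G)
    (hact : ∀ (g : Γ) (u v : V), G.Adj u v ↔ G.Adj (g • u) (g • v)) (g : Γ) (u v : V) :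
    G.dist (g • u) (g • v) = G.dist u v := by
  have le : ∀ (g : Γ) (u v : V), G.dist (g • u) (g • v) ≤ G.dist u v := by
    intro g u v
    obtain ⟨p, hp⟩ := hG.1.exists_walk_length_eq_dist u v
    let f : G →g G := ⟨fun z => g • z, fun {a b} h => (hact g a b).1 h⟩
    have := SimpleGraph.dist_le (p.map f)
    rw [SimpleGraph.Walk.length_map, hp] at this
    exact this
  refine le_antisymm (le g u v) ?_
  have := le g⁻¹ (g • u) (g • v)
  simpa using this

theorem act_HS (hG : MedianGraph G)
    (hact : ∀ (g : Γ) (u v : V), G.Adj u v ↔ G.Adj (g • u) (g • v)) (g : Γ) (a b : V) :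
    g • HS G a b = HS G (g • a) (g • b) := by
  ext z
  rw [Set.mem_smul_set_iff_inv_smul_mem, mem_HS, mem_HS, ← act_dist hG hact g (g⁻¹ • z) a,
    ← act_dist hG hact g (g⁻¹ • z) b, smul_inv_smul]

theorem act_HSs (hG : MedianGraph G)
    (hact : ∀ (g : Γ) (u v : V), G.Adj u v ↔ G.Adj (g • u) (g • v)) (g : Γ) {W : Set V}
    (hW : W ∈ HSs G) : g • W ∈ HSs G := by
  obtain ⟨a, b, hab, rfl⟩ := hW
  exact ⟨g • a, g • b, (hact g a b).1 hab, act_HS hG hact g a b⟩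

/-- The set of vertices of `C` in all big halfspaces is convex. -/
theorem cvx_sel (hG : MedianGraph G) {o : V → V → Bool} (ho : CubicalOrientation G o)
    {C : Set V} (hC : GCvx G C) (big : Set V → Prop) :
    GCvx G {v | v ∈ C ∧ ∀ W ∈ HSs G, big W → v ∈ W} := by
  rintro u ⟨hu, hu'⟩ v ⟨hv, hv'⟩ m hm
  exact ⟨hC u hu v hv m hm, fun W hW hb =>
    HSs_cvx hG ho hW u (hu' W hW hb) v (hv' W hW hb) m hm⟩

theorem inv_sel (hG : MedianGraph G)
    (hact : ∀ (g : Γ) (u v : V), G.Adj u v ↔ G.Adj (g • u) (g • v))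
    {C : Set V} (hC : ∀ (g : Γ), ∀ v ∈ C, g • v ∈ C) (big : Set V → Prop)
    (hbig : ∀ (g : Γ), ∀ W ∈ HSs G, big W → big (g • W)) :
    ∀ (g : Γ), ∀ v ∈ {v | v ∈ C ∧ ∀ W ∈ HSs G, big W → v ∈ W},
      g • v ∈ {v | v ∈ C ∧ ∀ W ∈ HSs G, big W → v ∈ W} := by
  rintro g v ⟨hv, hv'⟩
  refine ⟨hC g v hv, fun W hW hb => ?_⟩
  have := hv' _ (act_HSs hG hact g⁻¹ hW) (hbig g⁻¹ W hW hb)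
  rwa [Set.mem_smul_set_iff_inv_smul_mem, inv_inv] at this

theorem fin_viol (hG : MedianGraph G) {o : V → V → Bool} (ho : CubicalOrientation G o)
    {C : Set V} (hC : C.Finite) (x : V) (big : Set V → Prop)
    (hb : ∀ W ∈ HSs G, big W → (W ∩ C).Nonempty) :
    {W | W ∈ HSs G ∧ big W ∧ x ∉ W}.Finite := by
  have : (⋃ u ∈ C, SepHS G u x).Finite := hC.biUnion fun u _ => by
    obtain ⟨S, hS, -⟩ := Sep_fin hG ho u x
    exact S.finite_toSet.subset hS
  refine this.subset ?_
  rintro W ⟨hW, hbW, hx⟩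
  obtain ⟨u, huW, huC⟩ := hb W hW hbW
  exact Set.mem_biUnion huC ⟨hW, huW, hx⟩

theorem fin_stage (hG : MedianGraph G) {o : V → V → Bool} (ho : CubicalOrientation G o)
    (hact : ∀ (g : Γ) (u v : V), G.Adj u v ↔ G.Adj (g • u) (g • v))
    (hpres : ∀ (g : Γ) (u v : V), G.Adj u v → o (g • u) (g • v) = o u v) (n : ℕ) :
    ∀ C : Set V, C.Finite → C.Nonempty → GCvx G C → (∀ (g : Γ), ∀ v ∈ C, g • v ∈ C) →
      C.ncard = n → ∃ v : V, ∀ g : Γ, g • v = v := by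
  induction n using Nat.strong_induction_on with
  | _ n ih =>
  intro C hfin hne hcv hinv hn
  obtain ⟨x, hx⟩ := hne
  have hgC : ∀ g : Γ, g • C = C := by
    intro g
    ext z
    rw [Set.mem_smul_set_iff_inv_smul_mem]
    refine ⟨fun h => ?_, fun h => hinv _ _ h⟩
    have := hinv g _ h
    rwa [smul_inv_smul] at this
  have hint : ∀ (g : Γ) (W : Set V), g • W ∩ C = g • (W ∩ C) := by
    intro g W
    rw [Set.smul_set_inter, hgC]
  have hsum : ∀ W : Set V, (W ∩ C).ncard + (Wᶜ ∩ C).ncard = C.ncard := by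
    intro W
    rw [Set.inter_comm W, Set.inter_comm Wᶜ, ← Set.sdiff_eq]
    exact Set.ncard_inter_add_ncard_sdiff_eq_ncard C W hfin
  have hWfin : ∀ W : Set V, (W ∩ C).Finite := fun W => hfin.subset Set.inter_subset_right
  let big : Set V → Prop := fun W => C.ncard < 2 * (W ∩ C).ncard
  have b1 : ∀ W ∈ HSs G, big W → (W ∩ C).Nonempty := by
    intro W _ hb
    rw [Set.nonempty_iff_ne_empty]
    intro h
    simp [big, h] at hb
  obtain ⟨v0, hv0, hv0'⟩ := select hG ho C hcv big b1
    (fun W _ W' _ hb hsub => by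
      have : (W ∩ C).ncard ≤ (W' ∩ C).ncard :=
        Set.ncard_le_ncard (fun z hz => ⟨hsub hz, hz.2⟩) (hWfin _)
      simp only [big] at hb ⊢
      omega)
    (fun W _ hb hb' => by
      have := hsum W
      simp only [big] at hb hb'
      omega)
    x hx (fin_viol hG ho hfin x big b1)
  have Mcv := cvx_sel hG ho hcv big
  have Minv := inv_sel hG hact hinv big (fun g W _ hb => by
    simp only [big] at hb ⊢
    rwa [hint, Set.ncard_smul_set])
  by_cases hM : {v | v ∈ C ∧ ∀ W ∈ HSs G, big W → v ∈ W} = C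
  swap
  · have hss : {v | v ∈ C ∧ ∀ W ∈ HSs G, big W → v ∈ W} ⊂ C :=
      lt_of_le_of_ne (fun v hv => hv.1) hM
    exact ih _ (hn ▸ Set.ncard_lt_ncard hss hfin) _ (hfin.subset hss.1) ⟨v0, hv0, hv0'⟩ Mcv Minv rfl
  have half0 : ∀ W ∈ HSs G, (Wᶜ ∩ C).Nonempty → 2 * (W ∩ C).ncard ≤ C.ncard := by
    rintro W hW ⟨z, hzW, hzC⟩
    by_contra hlt
    rw [← hM] at hzC
    exact hzW (hzC.2 W hW (not_le.1 hlt))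
  have half : ∀ W ∈ HSs G, (W ∩ C).Nonempty → (Wᶜ ∩ C).Nonempty →
      2 * (W ∩ C).ncard = C.ncard := by
    intro W hW h1 h2
    have := half0 W hW h2
    have := half0 Wᶜ (HSs_compl hG hW) (by rwa [compl_compl])
    have := hsum W
    omega
  have uniq : ∀ W ∈ HSs G, ∀ W' ∈ HSs G, (W ∩ C).Nonempty → (W'ᶜ ∩ C).Nonempty →
      W ∩ C ⊆ W' → W = W' := by
    intro W hW W' hW' hne hne' hsub
    have hsub2 : W ∩ C ⊆ W' ∩ C := fun z hz => ⟨hsub hz, hz.2⟩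
    have hWc : (Wᶜ ∩ C).Nonempty := by
      obtain ⟨z, hz, hzC⟩ := hne'
      exact ⟨z, fun h => hz (hsub ⟨h, hzC⟩), hzC⟩
    have e1 := half W hW hne hWc
    have e2 := half W' hW' (hne.mono hsub2) hne'
    have heq := Set.eq_of_subset_of_ncard_le hsub2 (by omega) (hWfin _)
    obtain ⟨u, hu, huC⟩ := hne
    obtain ⟨v, hv, hvC⟩ := hWc
    obtain ⟨c, d, hcd, hc, hd, hdist⟩ := cross_edge hG.1 W _ u v rfl hu hv
    have t1 := hG.1.dist_triangle (u := u) (v := c) (w := v)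
    have t2 := hG.1.dist_triangle (u := u) (v := d) (w := v)
    have t3 := hG.1.dist_triangle (u := c) (v := d) (w := v)
    have t4 := hG.1.dist_triangle (u := u) (v := c) (w := d)
    have t5 := SimpleGraph.dist_eq_one_iff_adj.2 hcd
    have hcC := hcv u huC v hvC c (by omega)
    have hdC := hcv u huC v hvC d (by omega)
    have hc' : c ∈ W' := hsub ⟨hc, hcC⟩
    have hd' : d ∉ W' := fun h => hd (heq.symm ▸ (⟨h, hdC⟩ : d ∈ W' ∩ C) : d ∈ W ∩ C).1
    rw [HSs_eq hG ho hW hcd hc hd, HSs_eq hG ho hW' hcd hc' hd']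
  let σ : Set V → Prop := fun W => ∃ a b, G.Adj a b ∧ W = HS G a b ∧ o a b = true
  have σ1 : ∀ W, σ W → ¬ σ Wᶜ := by
    rintro W ⟨a, b, hab, rfl, hoab⟩ ⟨c, d, hcd, he, hocd⟩
    have hd : d ∈ HS G a b := by
      by_contra h
      have h' : d ∈ (HS G a b)ᶜ := h
      rw [he, mem_HS] at h'
      simp at h'
    have hc : c ∉ HS G a b := by
      have h' : c ∈ HS G c d := by simp [mem_HS, SimpleGraph.dist_eq_one_iff_adj.2 hcd]
      rw [← he] at h'
      exact h'
    have := (par_edges hG ho _ a b d c hab hcd.symm rfl hd hc).2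
    exact ho.1 c d hcd (by rw [hocd, ← this, hoab])
  have σ2 : ∀ W ∈ HSs G, σ W ∨ σ Wᶜ := by
    rintro W ⟨a, b, hab, rfl⟩
    have := ho.1 a b hab
    cases h : o a b with
    | true => exact Or.inl ⟨a, b, hab, rfl, h⟩
    | false =>
      refine Or.inr ⟨b, a, hab.symm, HS_compl hG hab, ?_⟩
      rw [h] at this
      simpa using this.symm
  have σ3 : ∀ (g : Γ) W, σ W → σ (g • W) := by
    rintro g W ⟨a, b, hab, rfl, hoab⟩
    exact ⟨g • a, g • b, (hact g a b).1 hab, act_HS hG hact g a b, by rw [hpres g a b hab, hoab]⟩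
  let big2 : Set V → Prop := fun W => (W ∩ C).Nonempty ∧ ((Wᶜ ∩ C).Nonempty → σ W)
  have c1 : ∀ W ∈ HSs G, big2 W → (W ∩ C).Nonempty := fun W _ h => h.1
  obtain ⟨v, hv, hv'⟩ := select hG ho C hcv big2 c1
    (fun W hW W' hW' hb hsub => by
      have hne' : (W' ∩ C).Nonempty := hb.1.mono (fun z hz => ⟨hsub hz, hz.2⟩)
      refine ⟨hne', fun h => ?_⟩
      have := uniq W hW W' hW' hb.1 h hsub
      subst this
      exact hb.2 h)
    (fun W hW hb hb' => by
      have s1 := hb.2 hb'.1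
      have s2 := hb'.2 (by rw [compl_compl]; exact hb.1)
      exact σ1 W s1 s2)
    x hx (fin_viol hG ho hfin x big2 c1)
  have inv2 := inv_sel hG hact hinv big2 (fun g W _ hb => by
    refine ⟨by rw [hint]; exact hb.1.smul_set, fun h => σ3 g W (hb.2 ?_)⟩
    rw [← Set.smul_set_compl, hint] at h
    exact Set.smul_set_nonempty.1 h)
  refine ⟨v, fun g => ?_⟩
  obtain ⟨hgC', hg'⟩ := inv2 g v ⟨hv, hv'⟩
  by_contra hne
  obtain ⟨W, hW, h1, h2⟩ := HSs_sep hG hne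
  rcases σ2 W hW with h | h
  · exact h2 (hv' W hW ⟨⟨_, h1, hgC'⟩, fun _ => h⟩)
  · exact hg' Wᶜ (HSs_compl hG hW) ⟨⟨_, h2, hv⟩, fun _ => h⟩ h1

theorem exists_fin (hG : MedianGraph G) {o : V → V → Bool} (ho : CubicalOrientation G o)
    (hact : ∀ (g : Γ) (u v : V), G.Adj u v ↔ G.Adj (g • u) (g • v))
    (x : V) (N : ℕ) (hbdd : ∀ g : Γ, G.dist x (g • x) ≤ N) :
    ∃ C : Set V, C.Finite ∧ C.Nonempty ∧ GCvx G C ∧ (∀ (g : Γ), ∀ v ∈ C, g • v ∈ C) := by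
  classical
  let A : Set V → ℝ := fun W => if W ∈ HSs G ∧ x ∈ W then 1 else 0
  have hHS : ∀ (g : Γ) (W : Set V), g • W ∈ HSs G ↔ W ∈ HSs G := by
    intro g W
    refine ⟨fun h => ?_, act_HSs hG hact g⟩
    have := act_HSs hG hact g⁻¹ h
    rwa [inv_smul_smul] at this
  let K1 : Set (Set V → ℝ) := {c | ∀ W ∈ HSs G, ∀ W' ∈ HSs G, Disjoint W W' → c W + c W' ≤ 1}
  let K2 : Set (Set V → ℝ) := {c | ∀ W ∈ HSs G, c W + c Wᶜ = 1}
  have hK1 : IsClosed K1 := by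
    have : K1 = ⋂ (W : Set V) (_ : W ∈ HSs G) (W' : Set V) (_ : W' ∈ HSs G)
        (_ : Disjoint W W'), {c | c W + c W' ≤ 1} := by
      ext c
      simp [K1]
    rw [this]
    refine isClosed_iInter fun W => isClosed_iInter fun _ => isClosed_iInter fun W' =>
      isClosed_iInter fun _ => isClosed_iInter fun _ => ?_
    exact isClosed_le ((continuous_apply W).add (continuous_apply W')) continuous_const
  have hK2 : IsClosed K2 := by
    have : K2 = ⋂ (W : Set V) (_ : W ∈ HSs G), {c | c W + c Wᶜ = 1} := by
      ext c
      simp [K2]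
    rw [this]
    refine isClosed_iInter fun W => isClosed_iInter fun _ => ?_
    exact isClosed_eq ((continuous_apply W).add (continuous_apply Wᶜ)) continuous_const
  have hkey : ∃ c ∈ K1 ∩ K2, (∀ (g : Γ) W, c (g • W) = c W) ∧
      Summable (fun W => (c W - A W) ^ 2) := by
    refine l2fix (Γ := Γ) A (2 * N) ?_ ?_ (K1 ∩ K2) (hK1.inter hK2) ?_ ?_ ?_
    · intro g
      obtain ⟨S, hS, hSc⟩ := Sep_fin hG ho x (g • x)
      obtain ⟨S', hS', hSc'⟩ := Sep_fin hG ho (g • x) x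
      refine ⟨S ∪ S', ?_, ?_⟩
      · have := Finset.card_union_le S S'
        have := hbdd g
        rw [G.dist_comm] at hSc'
        omega
      · intro W hW
        rw [Finset.mem_union, not_or] at hW
        have i1 : W ∈ HSs G → x ∈ W → g • x ∈ W := by
          intro h1 h2
          by_contra h3
          exact hW.1 (hS ⟨h1, h2, h3⟩)
        have i2 : W ∈ HSs G → g • x ∈ W → x ∈ W := by
          intro h1 h2
          by_contra h3
          exact hW.2 (hS' ⟨h1, h2, h3⟩)
        have : (g⁻¹ • W ∈ HSs G ∧ x ∈ g⁻¹ • W) ↔ (W ∈ HSs G ∧ x ∈ W) := by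
          rw [hHS, Set.mem_smul_set_iff_inv_smul_mem, inv_inv]
          tauto
        simp only [A, this]
    · intro W W'
      simp only [A]
      split_ifs <;> simp
    · rintro c ⟨h1, h2⟩ d ⟨h1', h2'⟩ s t hs ht hst
      refine ⟨fun W hW W' hW' hd => ?_, fun W hW => ?_⟩
      · have := h1 W hW W' hW' hd
        have := h1' W hW W' hW' hd
        simp only [Pi.add_apply, Pi.smul_apply, smul_eq_mul]
        nlinarith
      · have := h2 W hW
        have := h2' W hW
        simp only [Pi.add_apply, Pi.smul_apply, smul_eq_mul]
        linear_combination s * h2 W hW + t * h2' W hW + hst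
    · rintro g c ⟨h1, h2⟩
      refine ⟨fun W hW W' hW' hd => ?_, fun W hW => ?_⟩
      · exact h1 _ (act_HSs hG hact g hW) _ (act_HSs hG hact g hW') (by
          rw [Set.disjoint_left] at hd ⊢
          intro z hz hz'
          rw [Set.mem_smul_set_iff_inv_smul_mem] at hz hz'
          exact hd hz hz')
      · have := h2 _ (act_HSs hG hact g hW)
        simpa only [Set.smul_set_compl] using this
    · refine ⟨fun W hW W' hW' hd => ?_, fun W hW => ?_⟩
      · have : x ∈ W → x ∉ W' := fun h => Set.disjoint_left.1 hd h
        simp only [A]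
        split_ifs with h1 h2 <;> norm_num
        exact this h1.2 h2.2
      · have := HSs_compl hG hW
        by_cases hx : x ∈ W <;> simp [A, hW, this, hx]
  obtain ⟨c, ⟨hc1, hc2⟩, hcinv, hcsum⟩ := hkey
  have hT : {W | 1 / 4 ≤ (c W - A W) ^ 2}.Finite := by
    have := hcsum.tendsto_cofinite_zero.eventually (gt_mem_nhds (show (0 : ℝ) < 1 / 4 by norm_num))
    rw [Filter.eventually_cofinite] at this
    simpa only [not_lt] using this
  let big : Set V → Prop := fun W => 1 / 2 < c W
  obtain ⟨v0, -, hv0⟩ := select hG ho Set.univ (fun _ _ _ _ _ _ => trivial) big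
    (fun W hW _ => by rw [Set.inter_univ]; exact HSs_nonempty hW)
    (fun W hW W' hW' hb hsub => by
      rw [Set.inter_univ] at hsub
      have e1 := hc1 W hW _ (HSs_compl hG hW') (Set.disjoint_compl_right_iff_subset.2 hsub)
      have e2 := hc2 W' hW'
      simp only [big] at hb ⊢
      linarith)
    (fun W hW hb hb' => by
      have e2 := hc2 W hW
      simp only [big] at hb hb'
      linarith)
    x trivial (hT.subset (by
      rintro W ⟨hW, hb, hx⟩
      simp only [big] at hb
      have : A W = 0 := by simp [A, hx]
      show 1 / 4 ≤ (c W - A W) ^ 2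
      rw [this]
      nlinarith))
  refine ⟨{v | v ∈ Set.univ ∧ ∀ W ∈ HSs G, big W → v ∈ W}, ?_, ⟨v0, trivial, hv0⟩,
    cvx_sel hG ho (fun _ _ _ _ _ _ => trivial) big,
    inv_sel hG hact (C := Set.univ) (fun _ _ _ => trivial) big (fun g W _ hb => by
      simp only [big] at hb ⊢
      rwa [hcinv])⟩
  refine Set.Finite.of_injOn (f := fun v => {W | W ∈ {W | 1 / 4 ≤ (c W - A W) ^ 2} ∧ v ∈ W})
    (t := {S | S ⊆ {W | 1 / 4 ≤ (c W - A W) ^ 2}}) (fun v _ W hW => hW.1) ?_ hT.finite_subsets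
  rintro u ⟨-, hu⟩ v ⟨-, hv⟩ huv
  by_contra hne
  obtain ⟨W, hW, h1, h2⟩ := HSs_sep hG hne
  have l1 : c W ≤ 1 / 2 := by
    by_contra h
    exact h2 (hv W hW (not_le.1 h))
  have l2 : c Wᶜ ≤ 1 / 2 := by
    by_contra h
    exact hu Wᶜ (HSs_compl hG hW) (not_le.1 h) h1
  have l3 := hc2 W hW
  have l4 : c W = 1 / 2 := by linarith
  have hWT : 1 / 4 ≤ (c W - A W) ^ 2 := by
    rw [l4]
    simp only [A]
    split_ifs <;> norm_num
  have : W ∈ {W | W ∈ {W | 1 / 4 ≤ (c W - A W) ^ 2} ∧ u ∈ W} := ⟨hWT, h1⟩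
  simp only at huv
  rw [huv] at this
  exact h2 this.2

end action

/-- A group acting on a cubically oriented median graph, preserving the orientation
and with a bounded orbit, fixes a vertex. -/
theorem bounded_orbit_orientation_preserving_fixes_vertex {V : Type*}
    (𝒢 : SimpleGraph V) (hG : MedianGraph 𝒢)
    (o : V → V → Bool) (ho : CubicalOrientation 𝒢 o)
    {Γ : Type*} [Group Γ] [MulAction Γ V]
    (hact : ∀ (g : Γ) (u v : V), 𝒢.Adj u v ↔ 𝒢.Adj (g • u) (g • v))
    (hpres : ∀ (g : Γ) (u v : V), 𝒢.Adj u v → o (g • u) (g • v) = o u v)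
    (x : V) (N : ℕ) (hbdd : ∀ g : Γ, 𝒢.dist x (g • x) ≤ N) :
    ∃ v : V, ∀ g : Γ, g • v = v := by
  obtain ⟨C, h1, h2, h3, h4⟩ := exists_fin hG ho hact x N hbdd
  exact fin_stage hG ho hact hpres _ C h1 h2 h3 h4 rfl
end

section
/- Let 𝒢 be a median graph and consider the equivalence relation on walks of 𝒢 generated by the following endpoint-preserving elementary moves: (i) inserting or deleting a backtrack, i.e., two consecutive steps u→w→u traversing the same edge back and forth; (ii) flipping a square, i.e., replacing two consecutive steps u→v→w by u→v'→w whenever u, v, w, v' are four pairwise distinct vertices with u adjacent to v, v adjacent to w, w adjacent to v', and v' adjacent to u. Then any two walks of 𝒢 with the same starting vertex and the same ending vertex are equivalent under this relation. -/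
/-- Elementary moves on walks: deleting a backtrack, flipping a square (replacing
two consecutive steps `u → v → w` by `u → v' → w` across a 4-cycle), and the
congruence rule allowing a move anywhere inside a walk. -/
inductive WalkMove {V : Type*} (G : SimpleGraph V) :
    ∀ {u v : V}, G.Walk u v → G.Walk u v → Prop
  | backtrack {u w v : V} (h : G.Adj u w) (p : G.Walk u v) :
      WalkMove G (SimpleGraph.Walk.cons h (SimpleGraph.Walk.cons h.symm p)) p
  | square {u v w v' y : V} (h1 : G.Adj u v) (h2 : G.Adj v w)
      (h3 : G.Adj u v') (h4 : G.Adj v' w)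
      (huv : u ≠ v) (huw : u ≠ w) (huv' : u ≠ v') (hvw : v ≠ w) (hvv' : v ≠ v')
      (hwv' : w ≠ v') (p : G.Walk w y) :
      WalkMove G (SimpleGraph.Walk.cons h1 (SimpleGraph.Walk.cons h2 p))
        (SimpleGraph.Walk.cons h3 (SimpleGraph.Walk.cons h4 p))
  | cons {u v w : V} (h : G.Adj u v) {p q : G.Walk v w} :
      WalkMove G p q → WalkMove G (SimpleGraph.Walk.cons h p) (SimpleGraph.Walk.cons h q)

open SimpleGraph in
theorem MG_cons {V : Type*} (G : SimpleGraph V) {u v w : V} (h : G.Adj u v) {p q : G.Walk v w}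
    (H : Relation.EqvGen (fun p q : G.Walk v w => WalkMove G p q) p q) :
    Relation.EqvGen (fun p q : G.Walk u w => WalkMove G p q) (Walk.cons h p) (Walk.cons h q) := by
  induction H with
  | rel x y hxy => exact .rel _ _ (.cons h hxy)
  | refl x => exact .refl _
  | symm x y _ ih => exact .symm _ _ ih
  | trans x y z _ _ ih1 ih2 => exact .trans _ _ _ ih1 ih2

open SimpleGraph in
theorem MG_bip {V : Type*} (G : SimpleGraph V) (hG : MedianGraph G) {a b v : V}
    (h : G.Adj a b) : G.dist a v ≠ G.dist b v := by
  intro e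
  obtain ⟨m, ⟨h1, h2, h3⟩, -⟩ := hG.2 a b v
  have hab : G.dist a b = 1 := dist_eq_one_iff_adj.2 h
  have := G.dist_comm (u := b) (v := m)
  omega

open SimpleGraph in
theorem MG_geod {V : Type*} (G : SimpleGraph V) (hG : MedianGraph G) (v : V) (n : ℕ) :
    ∀ (u : V) (p q : G.Walk u v), G.dist u v = n → p.length = n → q.length = n →
    Relation.EqvGen (fun p q : G.Walk u v => WalkMove G p q) p q := by
  induction n using Nat.strong_induction_on with
  | _ n ih =>
  intro u p q hd hp hq
  cases p with
  | nil =>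
    cases q with
    | nil => exact .refl _
    | cons h q => simp at hp hq; omega
  | @cons _ a _ ha p =>
    cases q with
    | nil => simp at hp hq; omega
    | @cons _ b _ hb q =>
      simp only [Walk.length_cons] at hp hq
      have h1 := dist_le p
      have h2 := dist_le q
      have hua : G.dist u a = 1 := dist_eq_one_iff_adj.2 ha
      have hub : G.dist u b = 1 := dist_eq_one_iff_adj.2 hb
      have t1 := hG.1.dist_triangle (u := u) (v := a) (w := v)
      have t2 := hG.1.dist_triangle (u := u) (v := b) (w := v)
      by_cases hab : a = b
      · subst hab
        exact MG_cons G ha (ih (n - 1) (by omega) a p q (by omega) (by omega) (by omega))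
      have hnadj : ¬ G.Adj a b := fun h => MG_bip G hG (v := v) h (by omega)
      have t3 := hG.1.dist_triangle (u := a) (v := u) (w := b)
      have c1 := G.dist_comm (u := a) (v := u)
      have hne0 : G.dist a b ≠ 0 := fun h => hab (hG.1.dist_eq_zero_iff.1 h)
      have hne1 : G.dist a b ≠ 1 := fun h => hnadj (dist_eq_one_iff_adj.1 h)
      obtain ⟨m, ⟨m1, m2, m3⟩, -⟩ := hG.2 a b v
      have c2 := G.dist_comm (u := b) (v := m)
      have ham : G.Adj a m := dist_eq_one_iff_adj.1 (by omega)
      have hbm : G.Adj b m := dist_eq_one_iff_adj.1 (by omega)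
      have hum : u ≠ m := by rintro rfl; omega
      obtain ⟨r, hr⟩ := hG.1.exists_walk_length_eq_dist m v
      refine .trans _ (Walk.cons ha (Walk.cons ham r)) _ (MG_cons G ha
        (ih (n - 1) (by omega) a _ _ (by omega) (by omega)
          (by simp only [Walk.length_cons]; omega))) ?_
      refine .trans _ (Walk.cons hb (Walk.cons hbm r)) _ (.rel _ _
        (.square _ _ _ _ ha.ne hum hb.ne ham.ne hab hbm.ne.symm r)) (MG_cons G hb
        (ih (n - 1) (by omega) b _ _ (by omega) (by simp only [Walk.length_cons]; omega)
          (by omega)))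

open SimpleGraph in
theorem MG_red {V : Type*} (G : SimpleGraph V) (hG : MedianGraph G) {u v : V} (p : G.Walk u v) :
    ∃ g : G.Walk u v, g.length = G.dist u v ∧
    Relation.EqvGen (fun p q : G.Walk u v => WalkMove G p q) p g := by
  induction p with
  | nil => exact ⟨Walk.nil, by simp, .refl _⟩
  | @cons u a v h p ih =>
    obtain ⟨g, hg, hpg⟩ := ih
    have hne := MG_bip G hG (v := v) h
    have hua : G.dist u a = 1 := dist_eq_one_iff_adj.2 h
    have c1 := G.dist_comm (u := a) (v := u)
    have t1 := hG.1.dist_triangle (u := u) (v := a) (w := v)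
    have t2 := hG.1.dist_triangle (u := a) (v := u) (w := v)
    by_cases hlt : G.dist a v < G.dist u v
    · exact ⟨Walk.cons h g, by simp only [Walk.length_cons]; omega, MG_cons G h hpg⟩
    · obtain ⟨r, hr⟩ := hG.1.exists_walk_length_eq_dist u v
      refine ⟨r, hr, .trans _ _ _ (MG_cons G h (hpg.trans _ _ _ (MG_geod G hG v _ a g
        (Walk.cons h.symm r) rfl hg (by simp only [Walk.length_cons]; omega))))
        (.rel _ _ (.backtrack h r))⟩

/-- In a median graph, any two walks with the same endpoints are equivalent under
the equivalence relation generated by backtrack insertions/deletions and square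
flips. -/
theorem walks_equivalent_by_backtracks_and_square_flips {V : Type*}
    (G : SimpleGraph V) (hG : MedianGraph G) {u v : V} (p q : G.Walk u v) :
    Relation.EqvGen (fun p q : G.Walk u v => WalkMove G p q) p q := by
  obtain ⟨g, hg, h1⟩ := MG_red G hG p
  obtain ⟨g', hg', h2⟩ := MG_red G hG q
  exact (h1.trans _ _ _ (MG_geod G hG v _ u g g' rfl hg hg')).trans _ _ _ (h2.symm _ _)
end
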